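/- Let F : [0,∞) → [0,∞) be non-constant. Then the sequence F∘a := (F(a_n))_{n∈ℤ} is a Pólya frequency sequence for every Pólya frequency sequence a = (a_n)_{n∈ℤ} if and only if F(x) = c·x for some c > 0. -/

import Mathlib

/-- A kernel on linearly ordered sets is totally non-negative if all matrices
obtained by evaluating it on increasing tuples have non-negative determinant. -/
def IsTNKernel {X Y : Type*} [LinearOrder X] [LinearOrder Y] (K : X → Y → ℝ) : Prop :=
  ∀ (n : ℕ) (x : Fin n → X) (y : Fin n → Y), StrictMono x → StrictMono y →
    0 ≤ (Matrix.of fun i j : Fin n => K (x i) (y j)).det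

/-- A Pólya frequency sequence: a bi-infinite real sequence whose associated
Toeplitz kernel on `ℤ × ℤ` is totally non-negative. -/
def IsPolyaFrequencySeq (a : ℤ → ℝ) : Prop :=
  IsTNKernel fun i j : ℤ => a (i - j)

open Filter Topology

lemma pf_rows {a : ℤ → ℝ} (ha : IsPolyaFrequencySeq a) {n : ℕ} (x y : Fin n → ℤ)
    (hy : StrictMono y) (S : Fin n → Finset ℕ) (w : Fin n → ℕ → ℝ) (hw : ∀ i k, 0 ≤ w i k)
    (hS : ∀ i j, i < j → ∀ k ∈ S i, ∀ l ∈ S j, x i - k ≤ x j - l) :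
    0 ≤ (Matrix.of fun i j : Fin n => ∑ k ∈ S i, w i k * a (x i - k - y j)).det := by
  have h1 : (Matrix.of fun i j : Fin n => ∑ k ∈ S i, w i k * a (x i - k - y j)).det
      = Matrix.detRowAlternating.toMultilinearMap
        (fun i => ∑ k ∈ S i, w i k • (fun j : Fin n => a (x i - k - y j))) := by
    change _ = Matrix.det _
    congr 1
    ext i j
    simp [Finset.sum_apply]
  rw [h1, MultilinearMap.map_sum_finset]
  refine Finset.sum_nonneg fun r hr => ?_
  rw [MultilinearMap.map_smul_univ, smul_eq_mul]
  refine mul_nonneg (Finset.prod_nonneg fun i _ => hw i _) ?_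
  change 0 ≤ (Matrix.of fun i j : Fin n => a (x i - r i - y j)).det
  rw [Fintype.mem_piFinset] at hr
  by_cases hinj : Function.Injective (fun i => x i - (r i : ℤ))
  · refine ha n (fun i => x i - r i) y ?_ hy
    exact (Monotone.strictMono_of_injective (fun i j hij => by
      rcases hij.eq_or_lt with h | h
      · rw [h]
      · exact hS i j h _ (hr i) _ (hr j)) hinj)
  · simp only [Function.Injective, not_forall] at hinj
    obtain ⟨i, j, hij, hne⟩ := hinj
    rw [Matrix.det_zero_of_row_eq hne]
    ext k
    simp only [Matrix.of_apply, hij]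

lemma pf_nonneg {a : ℤ → ℝ} (ha : IsPolyaFrequencySeq a) (n : ℤ) : 0 ≤ a n := by
  have := ha 1 (fun _ => n) (fun _ => 0) (Subsingleton.strictMono _) (Subsingleton.strictMono _)
  simpa using this

lemma pf_smul {a : ℤ → ℝ} (ha : IsPolyaFrequencySeq a) {c : ℝ} (hc : 0 ≤ c) :
    IsPolyaFrequencySeq fun n => c * a n := by
  intro n x y hx hy
  have : (Matrix.of fun i j : Fin n => c * a (x i - y j)) =
    c • (Matrix.of fun i j : Fin n => a (x i - y j)) := by ext; simp
  simp only
  rw [this, Matrix.det_smul]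
  exact mul_nonneg (pow_nonneg hc _) (ha n x y hx hy)

lemma pf_reflect {a : ℤ → ℝ} (ha : IsPolyaFrequencySeq a) :
    IsPolyaFrequencySeq fun n => a (-n) := by
  intro n x y hx hy
  have h := ha n y x hy hx
  rw [← Matrix.det_transpose] at h
  convert h using 2
  ext i j
  simp

lemma pf_delta : IsPolyaFrequencySeq fun n => if n = 0 then 1 else 0 := by
  intro n x y hx hy
  by_cases h : ∀ i, ∃ j, x i = y j
  · choose s hs using h
    have hmono : StrictMono s := fun i j hij => by
      have := hx hij
      rw [hs, hs] at this
      exact hy.lt_iff_lt.1 this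
    have hid : ∀ i, s i = i := fun i => by
      have := hmono.range_inj (g := id) strictMono_id
      have h2 : s = id := this.1 (by
        rw [Set.range_id]
        exact (Finite.injective_iff_surjective.1 hmono.injective).range_eq)
      rw [h2]; rfl
    have : (Matrix.of fun i j : Fin n => if x i - y j = 0 then (1 : ℝ) else 0) = 1 := by
      ext i j
      rw [Matrix.of_apply, Matrix.one_apply, hs, hid]
      simp only [sub_eq_zero, hy.injective.eq_iff]
    simp only
    rw [this]; simp
  · push Not at h
    obtain ⟨i, hi⟩ := h
    rw [Matrix.det_eq_zero_of_row_eq_zero i]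
    intro j
    simp [sub_eq_zero, hi j]

lemma pf_bidiag {a : ℤ → ℝ} (ha : IsPolyaFrequencySeq a) {u : ℝ} (hu : 0 ≤ u) :
    IsPolyaFrequencySeq fun n => a n + u * a (n - 1) := by
  intro n x y hx hy
  have := pf_rows ha x y hy (fun _ => Finset.range 2) (fun _ k => u ^ k)
    (fun i k => by positivity) (fun i j hij k hk l hl => by
      have := hx hij
      simp at hk hl
      omega)
  convert this using 5
  simp [Finset.sum_range_succ]
  left; congr 1; ring

lemma pf_geom {a c : ℤ → ℝ} (ha : IsPolyaFrequencySeq a) {r : ℝ} (hr : 0 ≤ r)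
    (hc : ∀ n, c n = a n + r * c (n - 1))
    (hlim : ∀ n : ℤ, Tendsto (fun m : ℕ => r ^ m * c (n - m)) atTop (𝓝 0)) :
    IsPolyaFrequencySeq c := by
  have tel : ∀ (m : ℕ) (n : ℤ), c n = r ^ m * c (n - m) + ∑ k ∈ Finset.range m, r ^ k * a (n - k) := by
    intro m
    induction m with
    | zero => intro n; simp
    | succ m ih =>
      intro n
      rw [ih n, Finset.sum_range_succ, hc (n - m)]
      push_cast
      rw [show n - (m : ℤ) - 1 = n - (m + 1) by ring]
      ring
  intro n x y hx hy
  cases n with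
  | zero => simp
  | succ k =>
  let d : Fin k → ℕ := fun i => (x i.succ - x i.castSucc).toNat
  let B : ℕ → Matrix (Fin (k+1)) (Fin (k+1)) ℝ := fun m => Matrix.of fun i j =>
    ∑ l ∈ (Fin.cons (Finset.range m) (fun i => Finset.range (d i)) : Fin (k+1) → Finset ℕ) i,
      r ^ l * a (x i - l - y j)
  let B' : Matrix (Fin (k+1)) (Fin (k+1)) ℝ := Matrix.of (Fin.cons (fun j => c (x 0 - y j))
    (fun i j => ∑ l ∈ Finset.range (d i), r ^ l * a (x i.succ - l - y j)))
  have hB : ∀ m, 0 ≤ (B m).det := fun m => by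
    refine pf_rows ha x y hy _ (fun _ l => r ^ l) (fun i l => by positivity) ?_
    intro i j hij p hp q hq
    obtain ⟨j', rfl⟩ : ∃ j', j = Fin.succ j' := ⟨j.pred (by rintro rfl; simp at hij), by simp⟩
    simp only [Fin.cons_succ, Finset.mem_range, d] at hq
    have : x i ≤ x j'.castSucc := hx.monotone (by
      rw [Fin.le_def]; rw [Fin.lt_def] at hij; simp at *; omega)
    omega
  have hdet : (Matrix.of fun i j : Fin (k+1) => c (x i - y j)).det = B'.det := by
    refine Matrix.det_eq_of_forall_row_eq_smul_add_pred (fun i => r ^ d i) (fun j => rfl) ?_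
    intro i j
    simp only [Matrix.of_apply, B', Fin.cons_succ]
    rw [tel (d i) (x i.succ - y j)]
    have h1 : (d i : ℤ) = x i.succ - x i.castSucc := by
      have := hx (Fin.castSucc_lt_succ (i := i))
      simp only [d]; omega
    rw [h1, add_comm]
    congr 1
    · refine Finset.sum_congr rfl fun l _ => ?_
      congr 2; ring
    · congr 2; ring
  simp only
  rw [hdet]
  have hT : Tendsto B atTop (𝓝 B') := by
    refine tendsto_pi_nhds.2 fun i => tendsto_pi_nhds.2 fun j => ?_
    refine Fin.cases ?_ (fun i => ?_) i
    · change Tendsto (fun m => ∑ l ∈ Finset.range m, r ^ l * a (x 0 - l - y j)) atTop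
        (𝓝 (c (x 0 - y j)))
      have h2 := (tendsto_const_nhds (x := c (x 0 - y j))).sub (hlim (x 0 - y j))
      rw [sub_zero] at h2
      refine h2.congr fun m => ?_
      rw [tel m (x 0 - y j), add_sub_cancel_left]
      refine Finset.sum_congr rfl fun l _ => ?_
      congr 2; ring
    · exact tendsto_const_nhds
  have hcont : Continuous (fun M : Matrix (Fin (k+1)) (Fin (k+1)) ℝ => M.det) :=
    continuous_id.matrix_det
  exact ge_of_tendsto' ((hcont.tendsto B').comp hT) hB

lemma pf_geom_zero {a c : ℤ → ℝ} (ha : IsPolyaFrequencySeq a) {r : ℝ} (hr : 0 ≤ r)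
    (hc : ∀ n, c n = a n + r * c (n - 1)) (h0 : ∀ n < 0, c n = 0) : IsPolyaFrequencySeq c := by
  refine pf_geom ha hr hc fun n => ?_
  refine tendsto_const_nhds.congr' ?_
  filter_upwards [eventually_gt_atTop n.toNat] with m hm
  rw [h0 _ (by omega), mul_zero]

lemma pf_geom_bdd {a c : ℤ → ℝ} (ha : IsPolyaFrequencySeq a) {r : ℝ} (hr : 0 ≤ r) (hr1 : r < 1)
    (hc : ∀ n, c n = a n + r * c (n - 1)) (h0 : ∀ n, |c n| ≤ 1) :
    IsPolyaFrequencySeq c := by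
  refine pf_geom ha hr hc fun n => ?_
  refine squeeze_zero_norm (fun m => ?_) (tendsto_pow_atTop_nhds_zero_of_lt_one hr hr1)
  rw [norm_mul, Real.norm_eq_abs, Real.norm_eq_abs, abs_of_nonneg (pow_nonneg hr m)]
  exact mul_le_of_le_one_right (pow_nonneg hr m) (h0 _)

lemma my_zpow_le_one {r : ℝ} (hr : 0 ≤ r) (h1 : r ≤ 1) {n : ℤ} (hn : 0 ≤ n) : r ^ n ≤ 1 := by
  lift n to ℕ using hn
  rw [zpow_natCast]
  exact pow_le_one₀ hr h1

lemma pf_onesided {r : ℝ} (hr : 0 < r) :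
    IsPolyaFrequencySeq fun n : ℤ => if 0 ≤ n then r ^ n else 0 := by
  refine pf_geom_zero pf_delta hr.le (fun n => ?_) (fun n hn => by simp [not_le.2 hn])
  rcases lt_trichotomy n 0 with h | h | h
  · have h1 : ¬ (0 ≤ n) := by omega
    have h2 : ¬ (0 ≤ n - 1) := by omega
    have h3 : n ≠ 0 := by omega
    simp only [h1, h2, h3, if_false]; ring
  · subst h; simp
  · have h1 : (0 ≤ n) := by omega
    have h2 : (0 ≤ n - 1) := by omega
    have h3 : n ≠ 0 := by omega
    simp only [h1, h2, h3, if_false, if_true]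
    rw [zpow_sub_one₀ hr.ne']; field_simp; ring

lemma pf_linear : IsPolyaFrequencySeq fun n : ℤ => if 0 ≤ n then (n : ℝ) + 1 else 0 := by
  refine pf_geom_zero (pf_onesided one_pos) zero_le_one (fun n => ?_)
    (fun n hn => by simp [not_le.2 hn])
  rcases lt_trichotomy n 0 with h | h | h
  · have h1 : ¬ (0 ≤ n) := by omega
    have h2 : ¬ (0 ≤ n - 1) := by omega
    simp only [h1, h2, if_false]; ring
  · subst h; simp
  · have h1 : (0 ≤ n) := by omega
    have h2 : (0 ≤ n - 1) := by omega
    simp only [h1, h2, if_true]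
    push_cast; rw [one_zpow]; ring

lemma pf_one_two_one : IsPolyaFrequencySeq fun n : ℤ =>
    if n = 0 then 1 else if n = 1 then 2 else if n = 2 then 1 else 0 := by
  convert pf_bidiag (pf_bidiag pf_delta zero_le_one) zero_le_one using 2 with n
  by_cases h0 : n = 0
  · subst h0; norm_num
  by_cases h1 : n = 1
  · subst h1; norm_num
  by_cases h2 : n = 2
  · subst h2; norm_num
  have h3 : n - 1 ≠ 0 := by omega
  have h4 : n - 1 - 1 ≠ 0 := by omega
  simp [h0, h1, h2, h3, h4]

/-- `r^|n|`, up to a factor. -/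
lemma pf_twosided {r : ℝ} (hr : 0 < r) (hr1 : r < 1) :
    IsPolyaFrequencySeq fun n : ℤ => r ^ |n| := by
  have h1r : 0 ≤ 1 - r ^ 2 := by nlinarith
  refine pf_geom_bdd (pf_smul (pf_reflect (pf_onesided hr)) h1r) hr.le hr1 (fun n => ?_)
    (fun n => ?_)
  · by_cases h : n ≤ 0
    · have h1 : 0 ≤ -n := by omega
      rw [if_pos h1, abs_of_nonpos h, abs_of_nonpos (by omega : n - 1 ≤ 0)]
      rw [show -(n - 1) = -n + 1 by ring, zpow_add_one₀ hr.ne']; ring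
    · have h1 : ¬ 0 ≤ -n := by omega
      rw [if_neg h1, abs_of_nonneg (by omega : 0 ≤ n), abs_of_nonneg (by omega : 0 ≤ n - 1)]
      rw [zpow_sub_one₀ hr.ne']; field_simp; ring
  · rw [abs_of_nonneg (by positivity)]
    exact my_zpow_le_one hr.le hr1.le (abs_nonneg n)

lemma pf_E {r : ℝ} (hr : 0 < r) (hr1 : r < 1) :
    IsPolyaFrequencySeq fun n : ℤ => if n ≤ 0 then 1 else r ^ n := by
  have h1r : 0 ≤ 1 - r := by linarith
  refine pf_geom_bdd (pf_smul (pf_reflect (pf_onesided one_pos)) h1r) hr.le hr1 (fun n => ?_)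
    (fun n => ?_)
  · by_cases h : n ≤ 0
    · have h1 : 0 ≤ -n := by omega
      rw [if_pos h1, if_pos h, if_pos (by omega)]
      rw [one_zpow]; ring
    · have h1 : ¬ 0 ≤ -n := by omega
      rw [if_neg h1, if_neg h]
      by_cases h2 : n = 1
      · subst h2; simp
      · rw [if_neg (by omega), zpow_sub_one₀ hr.ne']; field_simp; ring
  · by_cases h : n ≤ 0
    · simp [h]
    rw [if_neg h, abs_of_nonneg (by positivity)]
    exact my_zpow_le_one hr.le hr1.le (by omega)

/-- main test sequence -/
noncomputable def Dseq (e : ℝ) (n : ℤ) : ℝ := if n ≤ 0 then 1 else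
  ((1/2) * (1 - e) ^ (n+1) - e * (1/2 : ℝ) ^ (n+1)) / (1/2 - e)

lemma pf_D {e : ℝ} (he : 0 < e) (he1 : e < 1/2) : IsPolyaFrequencySeq (Dseq e) := by
  have hden : 0 < 1/2 - e := by linarith
  have ha : (0:ℝ) < 1 - e := by linarith
  have hd2 : 1 - 2 * e ≠ 0 := (by linarith : 0 < 1 - 2 * e).ne'
  have hd2' : 1 - e * 2 ≠ 0 := (by linarith : 0 < 1 - e * 2).ne'
  have key : ∀ n : ℤ, Dseq e n = (1/2) * (if n ≤ 0 then 1 else (1 - e) ^ n) + (1/2) * Dseq e (n-1) := by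
    intro n
    unfold Dseq
    by_cases h : n ≤ 0
    · rw [if_pos h, if_pos h, if_pos (by omega)]; norm_num
    · rw [if_neg h, if_neg h]
      by_cases h2 : n = 1
      · subst h2
        rw [if_pos (by norm_num)]
        norm_num [zpow_ofNat]
        field_simp; ring
      · rw [if_neg (by omega), sub_add_cancel, zpow_add_one₀ ha.ne', zpow_add_one₀ (by norm_num)]
        field_simp; ring
  have hE := pf_E ha (by linarith : 1 - e < 1)
  have hb : ∀ n : ℕ, |Dseq e n| ≤ 1 := by
    intro n
    induction n with
    | zero => simp [Dseq]
    | succ n ih =>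
      rw [key]
      have h1 : (((n + 1 : ℕ) : ℤ) - 1) = n := by push_cast; ring
      rw [h1, if_neg (by push_cast; omega)]
      have h2 : (1 - e) ^ ((n + 1 : ℕ) : ℤ) ≤ 1 := my_zpow_le_one ha.le (by linarith) (by omega)
      have h3 : 0 < (1 - e) ^ ((n + 1 : ℕ) : ℤ) := by positivity
      rw [abs_le] at *
      constructor <;> linarith
  refine pf_geom_bdd (pf_smul hE (by norm_num : (0:ℝ) ≤ 1/2)) (by norm_num : (0:ℝ) ≤ 1/2) (by norm_num) key ?_
  intro n
  rcases le_or_gt n 0 with h | h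
  · simp [Dseq, h]
  · lift n to ℕ using h.le
    exact hb n

/-! minors -/

lemma minor2 {b : ℤ → ℝ} (hb : IsPolyaFrequencySeq b) (n : ℤ) :
    b (n - 1) * b (n + 1) ≤ b n ^ 2 := by
  have h := hb 2 ![n, n+1] ![0, 1] (Fin.strictMono_iff_lt_succ.2 (by intro i; fin_cases i; simp))
    (by decide)
  rw [Matrix.det_fin_two] at h
  simp at h
  nlinarith

lemma minor3 {b : ℤ → ℝ} (hb : IsPolyaFrequencySeq b) (h0 : b (-1) = 0) :
    0 ≤ b 1 ^ 3 - 2 * b 0 * b 1 * b 2 + b 0 ^ 2 * b 3 := by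
  have h := hb 3 ![1, 2, 3] ![0, 1, 2] (by decide) (by decide)
  rw [Matrix.det_fin_three] at h
  simp [h0] at h
  nlinarith

lemma minor5 {b : ℤ → ℝ} (hb : IsPolyaFrequencySeq b) {c : ℝ} (h0 : ∀ n ≤ 0, b n = c)
    (d0 d1 d2 d3 d4 : ℝ) (e0 : d0 = b 0 - b 1) (e1 : d1 = b 1 - b 2) (e2 : d2 = b 2 - b 3)
    (e3 : d3 = b 3 - b 4) (e4 : d4 = b 4 - b 5) :
    0 ≤ c * (d1 ^ 4 - 3 * d0 * d1 ^ 2 * d2 + d0 ^ 2 * d2 ^ 2 + 2 * d0 ^ 2 * d1 * d3 - d0 ^ 3 * d4) := by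
  have h := hb 5 ![0, 2, 3, 4, 5] ![0, 1, 2, 3, 4] (by decide) (by decide)
  have h00 := h0 0 (by norm_num)
  have h01 := h0 (-1) (by norm_num)
  have h02 := h0 (-2) (by norm_num)
  have h03 := h0 (-3) (by norm_num)
  have h04 := h0 (-4) (by norm_num)
  simp [Matrix.det_succ_row_zero, Fin.sum_univ_succ, Fin.succAbove, h00, h01, h02, h03, h04] at h
  rw [e0, e1, e2, e3, e4, h00]
  refine h.trans_eq ?_
  ring

def Pres (F : ℝ → ℝ) : Prop :=
  ∀ a : ℤ → ℝ, IsPolyaFrequencySeq a → IsPolyaFrequencySeq fun n => F (a n)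

lemma F_zero {F : ℝ → ℝ} (H : Pres F) (hF0 : ∀ x : ℝ, 0 ≤ x → 0 ≤ F x)
    (hn : ∃ x y : ℝ, 0 ≤ x ∧ 0 ≤ y ∧ F x ≠ F y) : F 0 = 0 := by
  by_contra h0
  have hp : 0 < F 0 := lt_of_le_of_ne (hF0 0 le_rfl) (Ne.symm h0)
  have key : ∀ x, 0 ≤ x → F x = F 0 := by
    intro x hx
    have hb := H _ (pf_smul pf_delta hx)
    have h1 := minor2 hb 0
    have h2 := minor2 hb 1
    norm_num at h1 h2
    have := hF0 x hx
    nlinarith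
  obtain ⟨x, y, hx, hy, hxy⟩ := hn
  exact hxy (by rw [key x hx, key y hy])

lemma F_mono {F : ℝ → ℝ} (H : Pres F) (hF0 : ∀ x : ℝ, 0 ≤ x → 0 ≤ F x) (h0 : F 0 = 0)
    {x y : ℝ} (hx : 0 ≤ x) (hxy : x ≤ y) : F x ≤ F y := by
  rcases hx.eq_or_lt with rfl | hx
  · rw [h0]; exact hF0 _ hxy
  rcases hxy.eq_or_lt with rfl | hxy
  · rfl
  have hy : 0 < y := hx.trans hxy
  have hb := H _ (pf_smul (pf_twosided (div_pos hx hy) ((div_lt_one hy).2 hxy)) hy.le)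
  have h1 := minor2 hb 0
  have e : y * (x / y) = x := by field_simp
  norm_num [e] at h1
  have := hF0 x hx.le
  have := hF0 y hy.le
  nlinarith

lemma F_geo {F : ℝ → ℝ} (H : Pres F) (h0 : F 0 = 0)
    {x r : ℝ} (hx : 0 < x) (hr : 0 < r) : F x * F (x * r ^ 2) ≤ F (x * r) ^ 2 ∧
    0 ≤ F (x * r) ^ 3 - 2 * F x * F (x * r) * F (x * r ^ 2) + F x ^ 2 * F (x * r ^ 3) := by
  have hb := H _ (pf_smul (pf_onesided hr) hx.le)
  have h1 := minor2 hb 1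
  have h2 := minor3 hb (by norm_num [h0])
  norm_num [zpow_ofNat] at h1 h2
  exact ⟨h1, h2⟩

lemma F_pos {F : ℝ → ℝ} (H : Pres F) (hF0 : ∀ x : ℝ, 0 ≤ x → 0 ≤ F x) (h0 : F 0 = 0)
    (hn : ∃ x y : ℝ, 0 ≤ x ∧ 0 ≤ y ∧ F x ≠ F y) {x : ℝ} (hx : 0 < x) : 0 < F x := by
  obtain ⟨z, hz, hFz⟩ : ∃ z, 0 < z ∧ 0 < F z := by
    by_contra! hc
    have key : ∀ x, 0 ≤ x → F x = 0 := by
      intro x hx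
      rcases hx.eq_or_lt with rfl | hx
      · exact h0
      · exact le_antisymm (hc x hx) (hF0 x hx.le)
    obtain ⟨x, y, hx, hy, hxy⟩ := hn
    exact hxy (by rw [key x hx, key y hy])
  obtain ⟨x1, r, hx1, hr, hr1, hp2, hst⟩ : ∃ x1 r : ℝ, 0 < x1 ∧ 0 < r ∧ r < 1 ∧ 0 < F (x1 * r ^ 2) ∧
      3 * F (x1 * r) ≤ 4 * F (x1 * r ^ 2) := by
    by_contra! hc
    obtain ⟨N, hN⟩ := exists_pow_lt_of_lt_one (div_pos hFz (lt_of_lt_of_le hFz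
      (F_mono H hF0 h0 hz.le (by linarith : z ≤ 2 * z)))) (by norm_num : (3/4 : ℝ) < 1)
    rw [lt_div_iff₀ (lt_of_lt_of_le hFz (F_mono H hF0 h0 hz.le (by linarith : z ≤ 2 * z)))] at hN
    set r : ℝ := 1 - 1 / (2 * ((N : ℝ) + 1)) with hr
    have hN1 : (0:ℝ) < 2 * ((N:ℝ) + 1) := by positivity
    have hq : 1 / (2 * ((N : ℝ) + 1)) ≤ 1 / 2 := by
      apply one_div_le_one_div_of_le <;> linarith [(Nat.cast_nonneg N : (0:ℝ) ≤ N)]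
    have hq0 : 0 < 1 / (2 * ((N : ℝ) + 1)) := by positivity
    have hr0 : 0 < r := by linarith
    have hr1 : r < 1 := by linarith
    have hrN : 1 / 2 ≤ r ^ N := by
      have := one_add_mul_le_pow (a := -(1 / (2 * ((N : ℝ) + 1)))) (by linarith) N
      have h3 : (N:ℝ) * (1 / (2 * ((N : ℝ) + 1))) ≤ 1/2 := by
        rw [mul_one_div, div_le_iff₀ hN1]; linarith
      rw [hr, sub_eq_add_neg]; linarith
    have hind : ∀ k, k ≤ N → F (2 * z * r ^ k) ≤ (3/4) ^ k * F (2 * z) := by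
      intro k
      induction k with
      | zero => intro _; simp
      | succ k ih =>
        intro hk
        have h1 := ih (by omega)
        have h2 : z ≤ 2 * z * r ^ (k+1) := by
          have : r ^ N ≤ r ^ (k+1) := pow_le_pow_of_le_one hr0.le hr1.le hk
          nlinarith
        have e1 : 2 * z * r ^ k / r * r ^ 2 = 2 * z * r ^ (k+1) := by
          rw [div_mul_eq_mul_div, div_eq_iff hr0.ne']; ring
        have e2 : 2 * z * r ^ k / r * r = 2 * z * r ^ k := by field_simp
        have h3 := hc (2 * z * r ^ k / r) r (by positivity) hr0 hr1 (by
          rw [e1]; exact hFz.trans_le (F_mono H hF0 h0 hz.le h2))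
        rw [e1, e2] at h3
        rw [pow_succ (3/4 : ℝ)]; linarith
    have h4 := hind N le_rfl
    have h5 : F z ≤ F (2 * z * r ^ N) := F_mono H hF0 h0 hz.le (by nlinarith)
    linarith
  have hmono : ∀ k, F (x1 * r ^ (k+1)) ≤ F (x1 * r ^ k) := fun k =>
    F_mono H hF0 h0 (by positivity) (by
      rw [pow_succ, ← mul_assoc]; exact mul_le_of_le_one_right (by positivity) hr1.le)
  have hprop : ∀ k : ℕ, 0 < F (x1 * r ^ (k+2)) ∧
      3 * F (x1 * r ^ (k+1)) ^ 2 ≤ 4 * (F (x1 * r ^ k) * F (x1 * r ^ (k+2))) := by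
    intro k
    induction k with
    | zero =>
      have h1 := hmono 0
      have h2 := hmono 1
      norm_num at h1 h2 ⊢
      refine ⟨hp2, ?_⟩
      nlinarith
    | succ k ih =>
      obtain ⟨i1, i2⟩ := ih
      obtain ⟨g1, g2⟩ := F_geo H h0 (x := x1 * r ^ k) (by positivity) hr
      have e1 : x1 * r ^ k * r = x1 * r ^ (k+1) := by ring
      have e2 : x1 * r ^ k * r ^ 2 = x1 * r ^ (k+2) := by ring
      have e3 : x1 * r ^ k * r ^ 3 = x1 * r ^ (k+3) := by ring
      rw [e1, e2] at g1
      rw [e1, e2, e3] at g2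
      have m1 := hmono (k+1)
      have m0 := hmono k
      rw [show k + 1 + 2 = k + 3 by ring, show k + 1 + 1 = k + 2 by ring] at *
      set b0 := F (x1 * r ^ k)
      set b1 := F (x1 * r ^ (k+1))
      set b2 := F (x1 * r ^ (k+2))
      set b3 := F (x1 * r ^ (k+3))
      have p1 : 0 < b1 := by linarith
      have p0 : 0 < b0 := by linarith
      have hb3 : b1 * (2 * (b0 * b2) - b1 ^ 2) ≤ b0 ^ 2 * b3 := by nlinarith
      have hm : 0 < b1 ^ 2 := by positivity
      constructor
      · have : 0 < b0 ^ 2 * b3 := lt_of_lt_of_le (mul_pos p1 (by linarith)) hb3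
        exact pos_of_mul_pos_right this (by positivity)
      · have h5 : 0 ≤ (b0 * b2 - 3/4 * b1 ^ 2) * (b1 ^ 2 - b0 * b2) :=
          mul_nonneg (by linarith) (by linarith)
        have h6 : 3 * (b0 * b2) ^ 2 ≤ 4 * b1 ^ 2 * (2 * (b0 * b2) - b1 ^ 2) := by nlinarith
        have h7 : 4 * b1 * (b1 * (2 * (b0 * b2) - b1 ^ 2)) ≤ 4 * b1 * (b0 ^ 2 * b3) :=
          mul_le_mul_of_nonneg_left hb3 (by positivity)
        have h8 : b0 ^ 2 * (3 * b2 ^ 2) ≤ b0 ^ 2 * (4 * (b1 * b3)) := by nlinarith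
        exact le_of_mul_le_mul_left h8 (by positivity)
  obtain ⟨k, hk⟩ := exists_pow_lt_of_lt_one (div_pos hx hx1) hr1
  rw [lt_div_iff₀ hx1] at hk
  have h9 : x1 * r ^ (k+2) ≤ x := by
    have : r ^ (k+2) ≤ r ^ k := pow_le_pow_of_le_one hr.le hr1.le (by omega)
    nlinarith
  exact (hprop k).1.trans_le (F_mono H hF0 h0 (by positivity) h9)

lemma seq_lemma (s : ℕ → ℝ) (h0 : ∀ k, 0 ≤ s k) (anti : Antitone s)
    (hrec : ∀ k, 1 - Real.exp (-(s (k+1) - s (k+2))) ≤ (Real.exp (s k - s (k+1)) - 1) ^ 2)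
    (N : ℕ) (hN : 1 ≤ N) (A : ℝ) (hA : ∑ k ∈ Finset.range N, s k = A) (hAN : 16 * A ≤ N) :
    ∑ k ∈ Finset.range N, s (N + k) - ∑ k ∈ Finset.range N, s (2 * N + k) ≤ (A + 16 * A ^ 2) / N := by
  have hNpos : (0:ℝ) < N := by exact_mod_cast hN
  set η := A / N with hη
  have hη1 : η ≤ 1/16 := by rw [hη, div_le_iff₀ hNpos]; linarith
  have hsN : s N ≤ η := by
    rw [hη, le_div_iff₀ hNpos, ← hA]
    have := Finset.card_nsmul_le_sum (Finset.range N) s (s N) (fun k hk =>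
      anti (Finset.mem_range.1 hk).le)
    simp at this; linarith
  have ht0 : ∀ k, 0 ≤ s k - s (k+1) := fun k => by linarith [anti (Nat.le_succ k)]
  have htη : ∀ k, N ≤ k → s k - s (k+1) ≤ η := fun k hk => by linarith [anti hk, h0 (k+1)]
  have hstep : ∀ k, N ≤ k → s (k+1) - s (k+2) ≤ 8 * (s k - s (k+1)) ^ 2 := by
    intro k hk
    have h1 := hrec k
    have a0 := ht0 k
    have a1 := htη k hk
    have b0 := ht0 (k+1)
    have b1 := htη (k+1) (by omega)
    rw [show k + 1 + 1 = k + 2 by ring] at b0 b1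
    set t := s k - s (k+1)
    set u := s (k+1) - s (k+2)
    have e1 : Real.exp t - 1 ≤ 2 * t := by
      have := Real.abs_exp_sub_one_le (x := t) (by rw [abs_of_nonneg a0]; linarith)
      rw [abs_of_nonneg a0] at this
      exact (le_abs_self _).trans this
    have e1' : 0 ≤ Real.exp t - 1 := by linarith [Real.add_one_le_exp t]
    have e2 : u / 2 ≤ 1 - Real.exp (-u) := by
      have hm : Real.exp (-u) * Real.exp u = 1 := by rw [← Real.exp_add]; simp
      have := Real.add_one_le_exp u
      have hp := Real.exp_pos (-u)
      nlinarith
    nlinarith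
  have hhalf : ∀ k, N ≤ k → s (k+1) - s (k+2) ≤ (s k - s (k+1)) / 2 := by
    intro k hk
    have := hstep k hk
    have a0 := ht0 k
    have a1 := htη k hk
    nlinarith
  have hη0 : 0 ≤ η := (h0 N).trans hsN
  have hM : ∀ j, s (N+1) - s (N+1+j) + 2 * (s (N+1+j) - s (N+1+j+1)) ≤ 16 * η ^ 2 := by
    intro j
    induction j with
    | zero =>
      have := hstep N le_rfl
      have a0 := ht0 N
      have a1 := htη N le_rfl
      simp only [add_zero]
      rw [show N + 1 + 1 = N + 2 by ring]
      nlinarith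
    | succ j ih =>
      have := hhalf (N+1+j) (by omega)
      rw [show N + 1 + j + 1 = N + 1 + (j+1) by ring, show N + 1 + j + 2 = N + 1 + (j+1)+1 by ring] at *
      linarith
  obtain ⟨n, rfl⟩ : ∃ n, N = n + 1 := ⟨N - 1, by omega⟩
  have hup : ∑ k ∈ Finset.range (n+1), s (n + 1 + k) ≤ n * s (n+1+1) + s (n+1) := by
    rw [Finset.sum_range_succ', add_zero]
    have := Finset.sum_le_card_nsmul (Finset.range n) (fun k => s (n+1+(k+1))) (s (n+1+1))
      (fun k _ => anti (by omega))
    simp at this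
    linarith
  have hlow : ((n:ℝ)+1) * (s (n+1+1) - 16 * η ^ 2) ≤ ∑ k ∈ Finset.range (n+1), s (2 * (n+1) + k) := by
    have := Finset.card_nsmul_le_sum (Finset.range (n+1)) (fun k => s (2 * (n+1) + k)) (s (n+1+1) - 16 * η ^ 2)
      (fun k _ => by
        have h1 := hM (n + k)
        have h2 := ht0 (n+1+1+(n+k))
        rw [show n + 1 + 1 + (n + k) = 2 * (n+1) + k by ring] at h1 h2
        linarith)
    simp at this
    linarith
  have e : (A + 16 * A ^ 2) / ((n+1 : ℕ) : ℝ) = η + ((n:ℝ)+1) * (16 * η ^ 2) := by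
    rw [hη]; push_cast at *; field_simp
  rw [e]
  have := h0 (n+1+1)
  nlinarith

lemma F_jensen {F : ℝ → ℝ} (H : Pres F) (hF0 : ∀ x : ℝ, 0 ≤ x → 0 ≤ F x) (h0 : F 0 = 0)
    (hpos : ∀ x, 0 < x → 0 < F x) {x q : ℝ} (hx : 0 < x) (hq : 1 < q) :
    F x * F (x * q ^ 2) = F (x * q) ^ 2 := by
  have hq0 : 0 < q := by linarith
  refine le_antisymm (F_geo H h0 hx hq0).1 ?_
  set A := Real.log (F x) - Real.log (F (x / q)) with hA
  suffices hs : (Real.log (F (x * q)) - Real.log (F x)) -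
      (Real.log (F (x * q ^ 2)) - Real.log (F (x * q))) ≤ 0 by
    have p0 := hpos x hx
    have p1 := hpos (x * q) (by positivity)
    have p2 := hpos (x * q ^ 2) (by positivity)
    rw [← Real.log_le_log_iff (by positivity) (by positivity), Real.log_mul p0.ne' p2.ne',
      Real.log_pow]
    push_cast; linarith
  have hlim : Tendsto (fun N : ℕ => (A + 16 * A ^ 2) / (N : ℝ)) atTop (𝓝 0) :=
    tendsto_const_div_atTop_nhds_zero_nat _
  refine ge_of_tendsto hlim ?_
  obtain ⟨M, hM⟩ := exists_nat_ge (16 * A)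
  filter_upwards [eventually_ge_atTop M, eventually_ge_atTop 1] with N hNM hN1
  have hN0 : N ≠ 0 := by omega
  set r := q ^ ((N : ℝ)⁻¹) with hr
  have hrN : r ^ N = q := Real.rpow_inv_natCast_pow hq0.le hN0
  have hr1 : 1 < r := Real.one_lt_rpow hq (by positivity)
  have hr0 : 0 < r := by linarith
  let b : ℕ → ℝ := fun k => F (x / q * r ^ k)
  have hb : ∀ k, 0 < b k := fun k => hpos _ (by positivity)
  let s : ℕ → ℝ := fun k => Real.log (b (k+1)) - Real.log (b k)
  have hes : ∀ k, Real.exp (s k) = b (k+1) / b k := fun k => by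
    simp only [s]
    rw [Real.exp_sub, Real.exp_log (hb _), Real.exp_log (hb _)]
  have hgeo : ∀ k, b k * b (k+2) ≤ b (k+1) ^ 2 ∧
      0 ≤ b (k+1) ^ 3 - 2 * b k * b (k+1) * b (k+2) + b k ^ 2 * b (k+3) := by
    intro k
    have := F_geo H h0 (x := x / q * r ^ k) (by positivity) hr0
    have e1 : x / q * r ^ k * r = x / q * r ^ (k+1) := by ring
    have e2 : x / q * r ^ k * r ^ 2 = x / q * r ^ (k+2) := by ring
    have e3 : x / q * r ^ k * r ^ 3 = x / q * r ^ (k+3) := by ring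
    rw [e1, e2, e3] at this
    exact this
  have htel : ∀ n m : ℕ, ∑ k ∈ Finset.range m, s (n + k) = Real.log (b (n+m)) - Real.log (b n) := by
    intro n m
    exact Finset.sum_range_sub (fun k => Real.log (b (n + k))) m
  have hbN : b N = F x := by simp only [b]; rw [hrN]; congr 1; field_simp
  have hb0 : b 0 = F (x / q) := by simp [b]
  have hb2 : b (2 * N) = F (x * q) := by
    simp only [b]; rw [mul_comm 2 N, pow_mul, hrN]; congr 1; field_simp
  have hb3 : b (3 * N) = F (x * q ^ 2) := by
    simp only [b]; rw [mul_comm 3 N, pow_mul, hrN]; congr 1; field_simp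
  have key := seq_lemma s ?_ ?_ ?_ N hN1 A ?_ ?_
  · rw [htel, htel, show N + N = 2 * N by ring, show 2 * N + N = 3 * N by ring, hbN, hb2, hb3] at key
    exact key
  · intro k
    simp only [s]
    rw [sub_nonneg]
    apply Real.log_le_log (hb k)
    refine F_mono H hF0 h0 (by positivity) ?_
    exact mul_le_mul_of_nonneg_left (pow_le_pow_right₀ hr1.le (by omega)) (by positivity)
  · refine antitone_nat_of_succ_le fun k => ?_
    simp only [s]
    have h1 := Real.log_le_log (mul_pos (hb _) (hb _)) (hgeo k).1
    rw [Real.log_mul (hb _).ne' (hb _).ne', Real.log_pow] at h1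
    push_cast at h1
    rw [show k + 1 + 1 = k + 2 by ring]
    linarith
  · intro k
    rw [neg_sub, Real.exp_sub (s (k+2)), Real.exp_sub (s k), hes, hes, hes]
    have g := (hgeo k).2
    rw [show k + 1 + 1 = k + 2 by ring, show k + 2 + 1 = k + 3 by ring]
    have p0 := hb k
    have p1 := hb (k+1)
    have p2 := hb (k+2)
    have p3 := hb (k+3)
    set b0 := b k
    set b1 := b (k+1)
    set b2 := b (k+2)
    set b3 := b (k+3)
    rw [← sub_nonneg]
    have : (b1 / b0 / (b2 / b1) - 1) ^ 2 - (1 - b3 / b2 / (b2 / b1)) =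
      (b1 / (b0 ^ 2 * b2 ^ 2)) * (b1 ^ 3 - 2 * b0 * b1 * b2 + b0 ^ 2 * b3) := by
      field_simp; ring
    rw [this]
    positivity
  · have := htel 0 N
    simp only [zero_add] at this
    rw [this, hbN, hb0]
  · exact hM.trans (by exact_mod_cast hNM)

lemma F_mul {F : ℝ → ℝ} (H : Pres F) (hF0 : ∀ x : ℝ, 0 ≤ x → 0 ≤ F x) (h0 : F 0 = 0)
    (hpos : ∀ x, 0 < x → 0 < F x) {x y : ℝ} (hx : 0 < x) (hy : 0 < y) :
    F x * F y = F 1 * F (x * y) := by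
  have key : ∀ x y : ℝ, 0 < x → 0 < y → F x * F y = F (√(x * y)) ^ 2 := by
    intro x y hx hy
    wlog hxy : x ≤ y generalizing x y
    · rw [mul_comm, mul_comm x y]; exact this y x hy hx (le_of_not_ge hxy)
    rcases hxy.eq_or_lt with rfl | hxy
    · rw [Real.sqrt_mul_self hx.le]; ring
    have := F_jensen H hF0 h0 hpos hx (q := √(y / x)) (by
      rw [Real.lt_sqrt zero_le_one]; rw [lt_div_iff₀ hx]; linarith)
    rw [Real.sq_sqrt (by positivity)] at this
    have e1 : x * (y / x) = y := by field_simp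
    have e2 : x * √(y / x) = √(x * y) := by
      rw [eq_comm, Real.sqrt_eq_iff_mul_self_eq (by positivity) (by positivity)]
      have := Real.mul_self_sqrt (by positivity : 0 ≤ y / x)
      refine Eq.symm ?_
      calc x * √(y / x) * (x * √(y / x)) = x * x * (√(y / x) * √(y / x)) := by ring
        _ = x * y := by rw [this]; field_simp
    rw [e1, e2] at this
    exact this
  rw [key x y hx hy, key 1 (x * y) one_pos (by positivity), one_mul]

lemma F_pow {F : ℝ → ℝ} (H : Pres F) (hF0 : ∀ x : ℝ, 0 ≤ x → 0 ≤ F x) (h0 : F 0 = 0)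
    (hpos : ∀ x, 0 < x → 0 < F x) : ∃ α : ℝ, 0 ≤ α ∧ ∀ x, 0 < x → F x = F 1 * x ^ α := by
  have p1 := hpos 1 one_pos
  let f : ℝ →+ ℝ := AddMonoidHom.mk' (fun u => Real.log (F (Real.exp u)) - Real.log (F 1)) (by
    intro u v
    have pu := hpos _ (Real.exp_pos u)
    have pv := hpos _ (Real.exp_pos v)
    have puv := hpos _ (Real.exp_pos (u + v))
    have h := congrArg Real.log (F_mul H hF0 h0 hpos (Real.exp_pos u) (Real.exp_pos v))
    rw [← Real.exp_add, Real.log_mul pu.ne' pv.ne', Real.log_mul p1.ne' puv.ne'] at h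
    linarith)
  have hf : ∀ u, f u = Real.log (F (Real.exp u)) - Real.log (F 1) := fun u => rfl
  have hm : Monotone f := fun u v huv => by
    rw [hf, hf]
    have := Real.log_le_log (hpos _ (Real.exp_pos u))
      (F_mono H hF0 h0 (Real.exp_pos u).le (Real.exp_le_exp.2 huv))
    linarith
  have hc : Continuous f := MeasureTheory.Measure.AddMonoidHom.continuous_of_measurable f hm.measurable
  have hlin : ∀ u, f u = u * f 1 := fun u => by
    have := map_real_smul f hc u 1
    simpa using this
  refine ⟨f 1, ?_, ?_⟩
  · have := hm zero_le_one
    simpa using this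
  · intro x hx
    have h1 := hlin (Real.log x)
    rw [hf, Real.exp_log hx] at h1
    rw [Real.rpow_def_of_pos hx, ← h1, Real.exp_sub, Real.exp_log (hpos x hx), Real.exp_log p1]
    field_simp

noncomputable def hh : ℕ → ℝ → ℝ
  | 0, _ => 1
  | k+1, e => (1 - e) ^ (k+1) + hh k e / 2

noncomputable def WW : ℕ → ℝ → ℝ
  | 0, _ => 0
  | k+1, e => WW k e + hh k e / 2

lemma hh_eq (k : ℕ) {e : ℝ} (he : 1/2 - e ≠ 0) :
    hh k e = ((1 - e) ^ (k+1) - (1/2) ^ (k+1)) / (1/2 - e) := by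
  rw [eq_div_iff he]
  induction k with
  | zero => simp [hh]; ring
  | succ k ih =>
    simp only [hh]
    rw [add_mul, div_mul_eq_mul_div, ih]; ring

lemma Dseq_eq (k : ℕ) {e : ℝ} (he : 1/2 - e ≠ 0) : Dseq e k = 1 - e * WW k e := by
  have h1 : ∀ k : ℕ, 1 - e * WW k e =
      ((1/2) * (1 - e) ^ (k+1) - e * (1/2 : ℝ) ^ (k+1)) / (1/2 - e) := by
    intro k
    induction k with
    | zero => simp [WW]; rw [eq_div_iff (by simpa using he)]; ring
    | succ k ih =>
      simp only [WW]
      rw [mul_add, ← sub_sub, ih, hh_eq k he, eq_div_iff he, sub_mul, div_mul_cancel₀ _ he]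
      rw [show ∀ X : ℝ, e * (X / (1/2 - e) / 2) * (1/2 - e) = e * X / 2 * ((1/2 - e) / (1/2 - e)) by
        intro X; ring, div_self he]
      ring
  rw [h1]
  unfold Dseq
  cases k with
  | zero => simp; rw [eq_div_iff (by simpa using he)]; ring
  | succ k =>
    rw [if_neg (by push_cast; omega)]
    norm_cast

noncomputable def psi (α x : ℝ) : ℝ :=
  if x = 0 then α * (α - 1) / 2 else ((1 + x) ^ α - 1 - α * x) / x ^ 2

lemma psi_eq (α x : ℝ) : (1 + x) ^ α = 1 + α * x + x ^ 2 * psi α x := by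
  unfold psi
  split_ifs with h
  · subst h; simp
  · field_simp; ring

lemma psi_cont (α : ℝ) : ContinuousAt (psi α) 0 := by
  rw [continuousAt_iff_punctured_nhds]
  have h0 : psi α 0 = α * (α - 1) / 2 := by simp [psi]
  rw [h0]
  have hev : ∀ᶠ x : ℝ in 𝓝[≠] 0, psi α x = ((1 + x) ^ α - 1 - α * x) / x ^ 2 := by
    filter_upwards [self_mem_nhdsWithin] with x hx
    simp only [Set.mem_compl_iff, Set.mem_singleton_iff] at hx
    simp [psi, hx]
  refine Tendsto.congr' (EventuallyEq.symm hev) ?_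
  have hd : ∀ (p x : ℝ), 0 < 1 + x → HasDerivAt (fun x : ℝ => (1 + x) ^ p) (p * (1 + x) ^ (p - 1)) x := by
    intro p x hx
    have := ((hasDerivAt_id x).const_add 1).rpow_const (p := p) (Or.inl hx.ne')
    simpa using this
  have hpos : ∀ᶠ x : ℝ in 𝓝[≠] 0, 0 < 1 + x := by
    apply eventually_nhdsWithin_of_eventually_nhds
    filter_upwards [lt_mem_nhds (show (-1:ℝ) < 0 by norm_num)] with x hx
    linarith
  refine HasDerivAt.lhopital_zero_nhdsNE (f' := fun x => α * (1 + x) ^ (α - 1) - α)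
    (g' := fun x => 2 * x) ?_ ?_ ?_ ?_ ?_ ?_
  · filter_upwards [hpos] with x hx
    have := ((hd α x hx).sub_const 1).sub ((hasDerivAt_id x).const_mul α)
    exact this.congr_deriv (by simp)
  · filter_upwards with x
    simpa using hasDerivAt_pow 2 x
  · filter_upwards [self_mem_nhdsWithin] with x hx
    simp only [Set.mem_compl_iff, Set.mem_singleton_iff] at hx
    simpa using hx
  · have : ContinuousAt (fun x : ℝ => (1 + x) ^ α - 1 - α * x) 0 :=
      ((hd α 0 (by norm_num)).continuousAt.sub continuousAt_const).sub (by fun_prop)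
    have h2 := this.tendsto
    simp at h2
    exact h2.mono_left nhdsWithin_le_nhds
  · have : ContinuousAt (fun x : ℝ => x ^ 2) 0 := by fun_prop
    have h2 := this.tendsto
    simp at h2
    exact h2.mono_left nhdsWithin_le_nhds
  · have h1 := hasDerivAt_iff_tendsto_slope.1 (hd (α - 1) 0 (by norm_num))
    have h2 := h1.const_mul (α / 2)
    simp only [add_zero, Real.one_rpow, mul_one] at h2
    rw [show α * (α - 1) / 2 = α / 2 * (α - 1) by ring]
    refine h2.congr' ?_
    filter_upwards [self_mem_nhdsWithin] with x hx
    simp only [Set.mem_compl_iff, Set.mem_singleton_iff] at hx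
    rw [slope_def_field]
    simp
    field_simp

lemma hasDerivAt_id_mul {S : ℝ → ℝ} (hS : ContinuousAt S 0) :
    HasDerivAt (fun e => e * S e) (S 0) 0 := by
  rw [hasDerivAt_iff_tendsto_slope]
  refine (hS.tendsto.mono_left nhdsWithin_le_nhds).congr' ?_
  filter_upwards [self_mem_nhdsWithin] with x hx
  simp only [Set.mem_compl_iff, Set.mem_singleton_iff] at hx
  rw [slope_def_field]
  field_simp; ring

lemma e4_deriv {f0 f1 f2 f3 f4 : ℝ → ℝ} {q0 q1 q2 q3 q4 : ℝ} (h0 : HasDerivAt f0 q0 0)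
    (h1 : HasDerivAt f1 q1 0) (h2 : HasDerivAt f2 q2 0) (h3 : HasDerivAt f3 q3 0)
    (h4 : HasDerivAt f4 q4 0) :
    HasDerivAt (fun e => f1 e ^ 4 - 3 * f0 e * f1 e ^ 2 * f2 e + f0 e ^ 2 * f2 e ^ 2
      + 2 * f0 e ^ 2 * f1 e * f3 e - f0 e ^ 3 * f4 e)
    (4 * f1 0 ^ 3 * q1 - 3 * (q0 * f1 0 ^ 2 * f2 0 + f0 0 * (2 * f1 0 * q1) * f2 0 + f0 0 * f1 0 ^ 2 * q2)
      + (2 * f0 0 * q0 * f2 0 ^ 2 + f0 0 ^ 2 * (2 * f2 0 * q2))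
      + 2 * (2 * f0 0 * q0 * f1 0 * f3 0 + f0 0 ^ 2 * q1 * f3 0 + f0 0 ^ 2 * f1 0 * q3)
      - (3 * f0 0 ^ 2 * q0 * f4 0 + f0 0 ^ 3 * q4)) 0 := by
  have := ((((h1.pow 4).sub (((h0.const_mul 3).mul (h1.pow 2)).mul h2)).add
    ((h0.pow 2).mul (h2.pow 2))).add ((((h0.pow 2).const_mul 2).mul h1).mul h3)).sub ((h0.pow 3).mul h4)
  exact this.congr_deriv (by simp; ring)

lemma hh_deriv : ∀ k : ℕ, ∃ q, HasDerivAt (hh k) q 0 := by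
  intro k
  induction k with
  | zero => exact ⟨0, hasDerivAt_const _ _⟩
  | succ k ih =>
    obtain ⟨q, hq⟩ := ih
    exact ⟨_, ((((hasDerivAt_id (0:ℝ)).const_sub 1).pow (k+1)).add (hq.div_const 2))⟩

lemma WW_cont (k : ℕ) : ContinuousAt (WW k) 0 := by
  induction k with
  | zero => exact continuousAt_const
  | succ k ih =>
    obtain ⟨q, hq⟩ := hh_deriv k
    exact ih.add (hq.continuousAt.div_const 2)

noncomputable def hd' : ℕ → ℝ
  | 0 => 0
  | k+1 => -(k+1) + hd' k / 2

lemma hh_deriv' (k : ℕ) : HasDerivAt (hh k) (hd' k) 0 := by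
  induction k with
  | zero => exact hasDerivAt_const _ _
  | succ k ih =>
    have := ((((hasDerivAt_id (0:ℝ)).const_sub 1).pow (k+1)).add (ih.div_const 2))
    exact this.congr_deriv (by simp [hd'])

noncomputable def RR (α : ℝ) (k : ℕ) (e : ℝ) : ℝ := WW k e ^ 2 * psi α (-(e * WW k e))

lemma RR_cont (α : ℝ) (k : ℕ) : ContinuousAt (RR α k) 0 := by
  unfold RR
  refine ((WW_cont k).pow 2).mul ?_
  have h : ContinuousAt (fun e => -(e * WW k e)) 0 := (continuousAt_id.mul (WW_cont k)).neg
  refine ContinuousAt.comp (g := psi α) (f := fun e => -(e * WW k e)) ?_ h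
  simpa using psi_cont α

noncomputable def DD (α : ℝ) (k : ℕ) (e : ℝ) : ℝ :=
  α * (hh k e / 2) + e * (RR α k e - RR α (k+1) e)

lemma DD_deriv (α : ℝ) (k : ℕ) : HasDerivAt (DD α k)
    (α * (hd' k / 2) + α * (α - 1) / 2 * (WW k 0 ^ 2 - WW (k+1) 0 ^ 2)) 0 := by
  have := (((hh_deriv' k).div_const 2).const_mul α).add
    (hasDerivAt_id_mul ((RR_cont α k).sub (RR_cont α (k+1))))
  exact this.congr_deriv (by simp [RR, psi]; ring)

lemma DD_eq (α : ℝ) (k : ℕ) {e : ℝ} (he : 1/2 - e ≠ 0) :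
    Dseq e k ^ α - Dseq e ((k+1 : ℕ) : ℤ) ^ α = e * DD α k e := by
  rw [Dseq_eq k he, Dseq_eq (k+1) he, sub_eq_add_neg 1, sub_eq_add_neg 1, psi_eq, psi_eq]
  simp only [DD, RR]
  rw [show WW (k+1) e = WW k e + hh k e / 2 from rfl]
  ring

lemma Dseq_pos {e : ℝ} (he : 0 < e) (he1 : e < 1/2) (n : ℤ) : 0 < Dseq e n := by
  unfold Dseq
  split_ifs with h
  · norm_num
  · lift n to ℕ using by omega
    refine div_pos ?_ (by linarith)
    have h1 : (1/2 : ℝ) ^ (n+1) ≤ (1 - e) ^ (n+1) := pow_le_pow_left₀ (by norm_num) (by linarith) _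
    have h2 : 0 < (1/2 : ℝ) ^ (n+1) := by positivity
    norm_cast
    nlinarith

lemma alpha_le_one {F : ℝ → ℝ} (H : Pres F) {α : ℝ} (h1 : 0 < F 1)
    (hF : ∀ x, 0 < x → F x = F 1 * x ^ α) (hα : 1 < α) : False := by
  have hder := e4_deriv (DD_deriv α 0) (DD_deriv α 1) (DD_deriv α 2) (DD_deriv α 3) (DD_deriv α 4)
  set g : ℝ → ℝ := fun e => DD α 1 e ^ 4 - 3 * DD α 0 e * DD α 1 e ^ 2 * DD α 2 e
      + DD α 0 e ^ 2 * DD α 2 e ^ 2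
      + 2 * DD α 0 e ^ 2 * DD α 1 e * DD α 3 e - DD α 0 e ^ 3 * DD α 4 e with hg
  have hg0 : g 0 = 0 := by
    simp [hg, DD, hh]; ring
  have hgn : ∀ᶠ e in 𝓝[>] (0:ℝ), 0 ≤ slope g 0 e := by
    filter_upwards [Ioo_mem_nhdsGT (show (0:ℝ) < 1/2 by norm_num)] with e he
    obtain ⟨he0, he1⟩ := he
    have hne : 1/2 - e ≠ 0 := by linarith
    rw [slope_def_field, hg0, sub_zero, sub_zero]
    refine div_nonneg ?_ he0.le
    have hb := H _ (pf_D he0 he1)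
    have hd : ∀ k : ℕ, F 1 * (e * DD α k e) = F (Dseq e k) - F (Dseq e ((k+1 : ℕ) : ℤ)) := by
      intro k
      rw [hF _ (Dseq_pos he0 he1 _), hF _ (Dseq_pos he0 he1 _), ← DD_eq α k hne]; ring
    have := minor5 hb (c := F 1) (fun n hn => by simp [Dseq, hn]) _ _ _ _ _
      (hd 0) (hd 1) (hd 2) (hd 3) (hd 4)
    have e2 : F 1 * (F 1 * e) ^ 4 * g e = F 1 * ((F 1 * (e * DD α 1 e)) ^ 4 -
      3 * (F 1 * (e * DD α 0 e)) * (F 1 * (e * DD α 1 e)) ^ 2 * (F 1 * (e * DD α 2 e)) +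
      (F 1 * (e * DD α 0 e)) ^ 2 * (F 1 * (e * DD α 2 e)) ^ 2 +
      2 * (F 1 * (e * DD α 0 e)) ^ 2 * (F 1 * (e * DD α 1 e)) * (F 1 * (e * DD α 3 e)) -
      (F 1 * (e * DD α 0 e)) ^ 3 * (F 1 * (e * DD α 4 e))) := by
      simp only [hg]; ring
    rw [← e2] at this
    exact nonneg_of_mul_nonneg_right this (by positivity)
  have hlim := (hasDerivAt_iff_tendsto_slope.1 hder).mono_left
    (nhdsWithin_mono 0 (show Set.Ioi (0:ℝ) ⊆ {0}ᶜ from fun x hx => ne_of_gt hx))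
  have hfin := ge_of_tendsto hlim hgn
  have hneg : 0 < α ^ 3 * (α * (α - 1) / 2) := by
    have : 0 < α - 1 := by linarith
    have : 0 < α := by linarith
    positivity
  simp [DD, hh, WW, hd'] at hfin
  ring_nf at hfin hneg
  nlinarith

lemma alpha_ne_zero {F : ℝ → ℝ} (H : Pres F) (h0 : F 0 = 0) (h1 : 0 < F 1)
    (hF : ∀ x, 0 < x → F x = F 1) : False := by
  have hb := H _ pf_one_two_one
  have := minor3 hb (by norm_num [h0])
  norm_num [h0, hF 2 (by norm_num)] at this
  have h3 : 0 < F 1 ^ 3 := by positivity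
  nlinarith

lemma alpha_ge_one {F : ℝ → ℝ} (H : Pres F) (h0 : F 0 = 0) {α : ℝ} (h1 : 0 < F 1)
    (hF : ∀ x, 0 < x → F x = F 1 * x ^ α) (hα0 : 0 < α) (hα : α < 1) : False := by
  have hb := H _ pf_linear
  have := minor3 hb (by norm_num [h0])
  norm_num [hF 2 (by norm_num), hF 3 (by norm_num), hF 4 (by norm_num)] at this
  have hc := (Real.strictConcaveOn_rpow hα0 hα).2 (show (2:ℝ) ∈ Set.Ici 0 by simp)
    (show (4:ℝ) ∈ Set.Ici 0 by simp) (by norm_num) (show (0:ℝ) < 1/2 by norm_num)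
    (show (0:ℝ) < 1/2 by norm_num) (by norm_num)
  norm_num at hc
  have e4 : (4:ℝ) ^ α = 2 ^ α * 2 ^ α := by
    rw [← Real.mul_rpow (by norm_num) (by norm_num)]; norm_num
  have hp : (0:ℝ) < 2 ^ α := by positivity
  rw [e4] at hc this
  have h3 : 0 < F 1 ^ 3 * 2 ^ α := by positivity
  nlinarith

theorem stmt_16 (F : ℝ → ℝ) (hF0 : ∀ x : ℝ, 0 ≤ x → 0 ≤ F x)
    (hFnonconst : ∃ x y : ℝ, 0 ≤ x ∧ 0 ≤ y ∧ F x ≠ F y) :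
    (∀ a : ℤ → ℝ, IsPolyaFrequencySeq a → IsPolyaFrequencySeq fun n => F (a n)) ↔
      ∃ c : ℝ, 0 < c ∧ ∀ x : ℝ, 0 ≤ x → F x = c * x := by
  constructor
  · intro H
    have h0 := F_zero H hF0 hFnonconst
    have hpos : ∀ x, 0 < x → 0 < F x := fun x hx => F_pos H hF0 h0 hFnonconst hx
    have h1 := hpos 1 one_pos
    obtain ⟨α, hα, hF⟩ := F_pow H hF0 h0 hpos
    have hα1 : α = 1 := by
      rcases lt_trichotomy α 1 with h | h | h
      · exfalso
        rcases hα.eq_or_lt with h2 | h2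
        · exact alpha_ne_zero H h0 h1 (fun x hx => by rw [hF x hx, ← h2]; simp)
        · exact alpha_ge_one H h0 h1 hF h2 h
      · exact h
      · exact (alpha_le_one H h1 hF h).elim
    refine ⟨F 1, h1, fun x hx => ?_⟩
    rcases hx.eq_or_lt with rfl | hx
    · simp [h0]
    · rw [hF x hx, hα1, Real.rpow_one]
  · rintro ⟨c, hc, hF⟩ a ha
    have : (fun n => F (a n)) = fun n => c * a n := by
      funext n; exact hF _ (pf_nonneg ha n)
    rw [this]
    exact pf_smul ha hc.le
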